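/- arXiv:1206.4224 — 3 statements merged into one kernel-verified Lean document; each statement's English description precedes it below -/
import Mathlib

section
/- Let K be a field of characteristic zero and let P = Σ_{j=1}^{k} a_j X^{α_j} (1+X)^{β_j} be a polynomial in K[X] with nonnegative integer exponents α_1 ≤ ... ≤ α_k. If P is not identically zero, then the valuation of P (the largest v such that X^v divides P) is at most max_{1≤j≤k} (α_j + (k+1-j choose 2)). -/
open Polynomial

/-- The operator `X (1+X) d/dX`. -/
noncomputable def dlt {K : Type*} [Field K] : K[X] →ₗ[K] K[X] :=
  (LinearMap.mulLeft K (X * (1 + X))) ∘ₗ (Polynomial.derivative)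

theorem dlt_apply {K : Type*} [Field K] (p : K[X]) :
    dlt p = X * (1 + X) * derivative p := rfl

theorem dlt_mul {K : Type*} [Field K] (p q : K[X]) :
    dlt (p * q) = dlt p * q + p * dlt q := by
  simp only [dlt_apply, derivative_mul]; ring

theorem dlt_X_pow {K : Type*} [Field K] (a : ℕ) :
    dlt (X ^ a : K[X]) = C (a : K) * (1 + X) * X ^ a := by
  rw [dlt_apply]
  rcases a with _ | a
  · simp
  · rw [derivative_X_pow, Nat.add_sub_cancel]; ring

theorem dlt_one_add_X_pow {K : Type*} [Field K] (b : ℕ) :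
    dlt ((1 + X) ^ b : K[X]) = C (b : K) * X * (1 + X) ^ b := by
  rw [dlt_apply]
  rcases b with _ | b
  · simp
  · rw [derivative_pow, Nat.add_sub_cancel]; simp; ring

theorem dlt_iter_succ {K : Type*} [Field K] (i : ℕ) (p : K[X]) :
    (dlt ^ (i + 1)) p = dlt ((dlt ^ i) p) := by
  rw [pow_succ']; rfl

theorem dlt_dvd {K : Type*} [Field K] {v : ℕ} {p : K[X]} (h : X ^ v ∣ p) : X ^ v ∣ dlt p := by
  obtain ⟨q, rfl⟩ := h
  rw [dlt_mul, dlt_X_pow]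
  exact ⟨C (v : K) * (1 + X) * q + dlt q, by ring⟩

theorem dlt_pow_dvd {K : Type*} [Field K] {v : ℕ} {p : K[X]} (h : X ^ v ∣ p) (i : ℕ) :
    X ^ v ∣ (dlt ^ i) p := by
  induction i with
  | zero => simpa using h
  | succ i ih => rw [dlt_iter_succ]; exact dlt_dvd ih

theorem dlt_pow_lead {K : Type*} [Field K] {v : ℕ} {p : K[X]} (h : X ^ v ∣ p) (i : ℕ) :
    X ^ (v + 1) ∣ (dlt ^ i) p - C ((v : K) ^ i) * p := by
  induction i with
  | zero => simp
  | succ i ih =>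
    have h1 : X ^ (v + 1) ∣ dlt p - C (v : K) * p := by
      obtain ⟨q, rfl⟩ := h
      rw [dlt_mul, dlt_X_pow, dlt_apply q]
      exact ⟨C (v : K) * q + (1 + X) * derivative q, by ring⟩
    have h2 := dlt_dvd ih
    have h3 : (dlt ^ (i + 1)) p - C ((v : K) ^ (i + 1)) * p
        = dlt ((dlt ^ i) p - C ((v : K) ^ i) * p) + C ((v : K) ^ i) * (dlt p - C (v : K) * p) := by
      rw [dlt_iter_succ, map_sub, ← smul_eq_C_mul, ← smul_eq_C_mul, map_smul]
      simp only [smul_eq_C_mul, pow_succ, C_mul]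
      ring
    rw [h3]
    exact dvd_add h2 (Dvd.dvd.mul_left h1 _)

theorem dlt_pow_coeff {K : Type*} [Field K] {v : ℕ} {p : K[X]} (h : X ^ v ∣ p) (i : ℕ) :
    ((dlt ^ i) p).coeff v = (v : K) ^ i * p.coeff v := by
  have := X_pow_dvd_iff.1 (dlt_pow_lead h i) v (Nat.lt_succ_self v)
  rw [coeff_sub, coeff_C_mul] at this
  exact sub_eq_zero.1 this

theorem coeff_mul_low {K : Type*} [Field K] {m v : ℕ} {a b : K[X]} (ha : X ^ m ∣ a)
    (hb : X ^ v ∣ b) : (a * b).coeff (m + v) = a.coeff m * b.coeff v := by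
  obtain ⟨a, rfl⟩ := ha
  obtain ⟨b, rfl⟩ := hb
  have e : (X ^ m * a) * (X ^ v * b) = X ^ (m + v) * (a * b) := by ring
  rw [e]
  simp [coeff_X_pow_mul', mul_coeff_zero]

/-- Nonvanishing of the Wronskian. -/
theorem wronsk_ne_zero {K : Type*} [Field K] [CharZero K] {n : ℕ} (f : Fin n → K[X])
    (hf : LinearIndependent K f) :
    (Matrix.of fun i j : Fin n => (dlt ^ (i : ℕ)) (f j)).det ≠ 0 := by
  intro h0
  obtain ⟨c, hc, hc0⟩ := Matrix.exists_vecMul_eq_zero_iff.2 h0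
  have hcj : ∀ j, ∑ i, c i * (dlt ^ (i : ℕ)) (f j) = 0 := fun j => congrFun hc0 j
  have hex : ∃ m, ∃ i, (c i).coeff m ≠ 0 := by
    by_contra! hh
    exact hc (funext fun i => Polynomial.ext fun m => by simpa using hh m i)
  classical
  set m := Nat.find hex with hm
  obtain ⟨i0, hi0⟩ := Nat.find_spec hex
  rw [← hm] at hi0
  have hdiv : ∀ i, X ^ m ∣ c i := fun i => X_pow_dvd_iff.2 fun d hd => by
    have := Nat.find_min hex hd
    push Not at this
    exact this i
  set p : K[X] := ∑ i : Fin n, C ((c i).coeff m) * X ^ (i : ℕ) with hp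
  have hpc : p.coeff i0 = (c i0).coeff m := by
    rw [hp, finset_sum_coeff]
    simp only [coeff_C_mul, coeff_X_pow]
    rw [Finset.sum_eq_single i0]
    · simp
    · intro b _ hb
      rw [if_neg (fun h => hb (Fin.ext h.symm))]; simp
    · simp
  have hp0 : p ≠ 0 := by
    intro h; rw [h] at hpc; exact hi0 (by simpa using hpc.symm)
  have hn : 0 < n := i0.pos
  have hdeg : p.natDegree < n := by
    have : p.natDegree ≤ n - 1 := natDegree_sum_le_of_forall_le _ _ fun i _ =>
      (natDegree_C_mul_X_pow_le _ _).trans (by omega)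
    omega
  let T : Finset ℕ := p.roots.toFinset.preimage (Nat.cast) (Nat.cast_injective.injOn)
  have hT : T.card < n := by
    have h1 : T.card ≤ p.roots.toFinset.card :=
      Finset.card_le_card_of_injOn (Nat.cast) (fun x hx => by
        simpa [T] using hx) (Nat.cast_injective.injOn)
    have h2 := Multiset.toFinset_card_le p.roots
    have h3 := card_roots' p
    omega
  let φ : (Fin n → K) →ₗ[K] (T → K) :=
    LinearMap.pi fun v => (lcoeff K (v : ℕ)) ∘ₗ (Fintype.linearCombination K f)
  have hker : LinearMap.ker φ ≠ ⊥ := LinearMap.ker_ne_bot_of_finrank_lt (by simpa using hT)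
  obtain ⟨x, hx, hx0⟩ := (Submodule.ne_bot_iff _).1 hker
  set g : K[X] := ∑ j, x j • f j with hg
  have hg0 : g ≠ 0 := by
    intro h
    exact hx0 (funext fun j => Fintype.linearIndependent_iff.1 hf x h j)
  have hgT : ∀ v ∈ T, g.coeff v = 0 := fun v hv => by
    have := congrFun (LinearMap.mem_ker.1 hx) ⟨v, hv⟩
    simpa [φ, Fintype.linearCombination_apply, hg] using this
  set v := g.natTrailingDegree with hv
  have hgv : g.coeff v ≠ 0 := by
    have := (trailingCoeff_nonzero_iff_nonzero (p := g)).2 hg0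
    exact this
  have hgd : X ^ v ∣ g := X_pow_dvd_iff.2 fun d hd => coeff_eq_zero_of_lt_natTrailingDegree hd
  have hLg : ∑ i, c i * (dlt ^ (i : ℕ)) g = 0 := by
    simp only [hg, map_sum, map_smul, Finset.mul_sum]
    rw [Finset.sum_comm]
    refine Finset.sum_eq_zero fun j _ => ?_
    simp only [mul_smul_comm]
    rw [← Finset.smul_sum, hcj, smul_zero]
  have hco : (∑ i : Fin n, (c i).coeff m * (v : K) ^ (i : ℕ)) * g.coeff v = 0 := by
    have := congrArg (fun q => coeff q (m + v)) hLg
    simp only [finset_sum_coeff, coeff_zero] at this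
    rw [Finset.sum_mul, ← this]
    refine Finset.sum_congr rfl fun i _ => ?_
    rw [coeff_mul_low (hdiv i) (dlt_pow_dvd hgd i), dlt_pow_coeff hgd, mul_assoc]
  have hroot : p.eval (v : K) = 0 := by
    rcases mul_eq_zero.1 hco with h | h
    · simpa [hp, eval_finset_sum] using h
    · exact absurd h hgv
  exact hgv (hgT v (by simp [T, hp0, hroot]))

theorem exists_Q {K : Type*} [Field K] (a b i : ℕ) :
    ∃ Q : K[X], Q.natDegree ≤ i ∧
      (dlt ^ i) (X ^ a * (1 + X) ^ b : K[X]) = (X ^ a * (1 + X) ^ b) * Q := by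
  induction i with
  | zero => exact ⟨1, by simp, by simp⟩
  | succ i ih =>
    obtain ⟨Q, hQ, h⟩ := ih
    refine ⟨(C (a : K) * (1 + X) + C (b : K) * X) * Q + X * (1 + X) * derivative Q, ?_, ?_⟩
    · have h1 : (C (a : K) * (1 + X) + C (b : K) * X).natDegree ≤ 1 := by compute_degree
      have h2 : (X * (1 + X) : K[X]).natDegree ≤ 2 := by compute_degree
      refine natDegree_add_le_of_degree_le ?_ ?_
      · exact natDegree_mul_le.trans (by omega)
      · rcases Nat.eq_zero_or_pos Q.natDegree with h0 | h0
        · rw [eq_C_of_natDegree_eq_zero h0]; simp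
        · have := natDegree_derivative_lt (p := Q) (by omega)
          exact natDegree_mul_le.trans (by omega)
    · rw [dlt_iter_succ, h, dlt_mul, dlt_mul, dlt_X_pow, dlt_one_add_X_pow, dlt_apply Q]
      ring

theorem det_deg {K : Type*} [Field K] {n : ℕ} (Q : Matrix (Fin n) (Fin n) K[X])
    (hQ : ∀ i j, (Q i j).natDegree ≤ i) : Q.det.natDegree ≤ n.choose 2 := by
  rw [Matrix.det_apply]
  refine natDegree_sum_le_of_forall_le _ _ fun σ _ => ?_
  refine (natDegree_smul_le _ _).trans ?_
  refine (natDegree_prod_le _ _).trans ?_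
  calc ∑ i, (Q (σ i) i).natDegree ≤ ∑ i, ((σ i : Fin n) : ℕ) := Finset.sum_le_sum fun i _ => hQ _ _
    _ = ∑ i : Fin n, (i : ℕ) := Equiv.sum_comp σ (fun i : Fin n => (i : ℕ))
    _ = n.choose 2 := by
      rw [Fin.sum_univ_eq_sum_range (fun i => i), Finset.sum_range_id, Nat.choose_two_right]

theorem main_indep {K : Type*} [Field K] [CharZero K] {n : ℕ} (a : Fin n → K) (α β : Fin n → ℕ)
    (hli : LinearIndependent K fun j => (X ^ α j * (1 + X) ^ β j : K[X]))
    (j0 : Fin n) (ha : a j0 ≠ 0) (v : ℕ)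
    (hv : X ^ v ∣ ∑ j, a j • (X ^ α j * (1 + X) ^ β j : K[X])) :
    v ≤ α j0 + n.choose 2 := by
  classical
  set f : Fin n → K[X] := fun j => X ^ α j * (1 + X) ^ β j with hf
  have hX1 : (1 + X : K[X]) ≠ 0 := fun h => by
    have := congrArg (fun q => coeff q 1) h
    simp [coeff_one] at this
  have hf0 : ∀ j, f j ≠ 0 := fun j => mul_ne_zero (pow_ne_zero _ X_ne_zero) (pow_ne_zero _ hX1)
  have hW := wronsk_ne_zero f hli
  choose Q hQd hQ using fun (i j : Fin n) => exists_Q (K := K) (α j) (β j) i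
  set M : Matrix (Fin n) (Fin n) K[X] := Matrix.of fun i j : Fin n => (dlt ^ (i : ℕ)) (f j) with hM
  have hMQ : M.det = (∏ j, f j) * (Matrix.of Q).det := by
    rw [← Matrix.det_mul_row]
    congr 1
    ext1 i j
    exact hQ i j
  have hQ0 : (Matrix.of Q).det ≠ 0 := fun h => hW (by rw [hMQ, h, mul_zero])
  have hupd := Matrix.det_updateCol_sum M j0 (fun j => C (a j))
  choose N hN using fun i : Fin n => dlt_pow_dvd hv i
  have hup2 : (M.updateCol j0 fun k => ∑ i, C (a i) • M k i)
      = Matrix.of fun i j => (if j = j0 then X ^ v else f j) *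
          (Matrix.of fun i j => if j = j0 then N i else Q i j) i j := by
    ext1 i j
    by_cases hj : j = j0
    · subst hj
      simp only [Matrix.updateCol_self, Matrix.of_apply, if_true]
      rw [← hN i, map_sum]
      refine Finset.sum_congr rfl fun j _ => ?_
      rw [map_smul, smul_eq_C_mul]; rfl
    · simp only [Matrix.updateCol_ne hj, Matrix.of_apply, if_neg hj]
      exact hQ i j
  rw [hup2, Matrix.det_mul_row, hMQ] at hupd
  set D := (Matrix.of fun i j => if j = j0 then N i else Q i j).det
  rw [← Finset.mul_prod_erase _ _ (Finset.mem_univ j0), if_pos rfl,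
    ← Finset.mul_prod_erase _ f (Finset.mem_univ j0),
    Finset.prod_congr rfl (fun j hj => if_neg (Finset.ne_of_mem_erase hj))] at hupd
  have hpr : ∏ j ∈ Finset.univ.erase j0, f j ≠ 0 := Finset.prod_ne_zero_iff.2 fun j _ => hf0 j
  have hfin : X ^ v * D = (1 + X) ^ β j0 * (C (a j0) * (X ^ α j0 * (Matrix.of Q).det)) := by
    apply mul_left_cancel₀ hpr
    rw [smul_eq_mul] at hupd
    simp only [hf] at hupd ⊢
    linear_combination hupd
  have hcop : IsCoprime (X ^ v : K[X]) ((1 + X) ^ β j0) :=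
    IsCoprime.pow ⟨-1, 1, by ring⟩
  have hd := hcop.dvd_of_dvd_mul_left (Dvd.intro _ hfin)
  have hne : C (a j0) * (X ^ α j0 * (Matrix.of Q).det) ≠ 0 :=
    mul_ne_zero (C_ne_zero.2 ha) (mul_ne_zero (pow_ne_zero _ X_ne_zero) hQ0)
  have hle := natDegree_le_of_dvd hd hne
  rw [natDegree_X_pow, natDegree_C_mul ha] at hle
  have h1 := natDegree_mul_le (p := X ^ α j0) (q := (Matrix.of Q).det)
  rw [natDegree_X_pow] at h1
  have h2 := det_deg (Matrix.of Q) hQd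
  omega

/-- Minimal representations are by independent vectors with nonzero coefficients. -/
theorem exists_min_rep {K V ι : Type*} [Field K] [AddCommGroup V] [Module K V] [Fintype ι]
    (a : ι → K) (f : ι → V) :
    ∃ (S : Finset ι) (b : ι → K), (∑ j, a j • f j = ∑ j ∈ S, b j • f j) ∧
      (∀ j ∈ S, b j ≠ 0) ∧ LinearIndepOn K f (S : Set ι) := by
  classical
  have hex : ∃ n, ∃ (S : Finset ι) (b : ι → K), S.card = n ∧
      (∑ j, a j • f j = ∑ j ∈ S, b j • f j) := ⟨_, Finset.univ, a, rfl, rfl⟩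
  obtain ⟨S, b, hS, hb⟩ := Nat.find_spec hex
  have key : ∀ j ∈ S, ∀ b' : ι → K, (∑ j, a j • f j = ∑ j ∈ S, b' j • f j) → b' j ≠ 0 := by
    intro j hj b' hb' h0
    refine Nat.find_min hex (m := (S.erase j).card) ?_ ⟨S.erase j, b', rfl, ?_⟩
    · rw [← hS]; exact Finset.card_erase_lt_of_mem hj
    · rw [hb', ← Finset.add_sum_erase _ _ hj, h0, zero_smul, zero_add]
  refine ⟨S, b, hb, fun j hj => key j hj b hb, ?_⟩
  rw [linearIndepOn_finset_iff]
  intro g hg j hj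
  by_contra hgj
  refine key j hj (fun i => b i - b j / g j * g i) ?_ (by field_simp; simp)
  simp only [sub_smul, mul_smul, Finset.sum_sub_distrib, ← Finset.smul_sum, hg, smul_zero, sub_zero]
  exact hb

theorem stmt0 {K : Type*} [Field K] [CharZero K] (k : ℕ)
    (a : Fin k → K) (α β : Fin k → ℕ) (hα : Monotone α)
    (P : K[X]) (hPdef : P = ∑ j, C (a j) * X ^ (α j) * (1 + X) ^ (β j))
    (hP : P ≠ 0) :
    ∃ j : Fin k, P.rootMultiplicity 0 ≤ α j + (k - (j : ℕ)).choose 2 := by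
  classical
  obtain ⟨S, b, hS, hb, hli⟩ := exists_min_rep a (fun j => (X ^ α j * (1 + X) ^ β j : K[X]))
  have hPS : P = ∑ j ∈ S, b j • (X ^ α j * (1 + X) ^ β j : K[X]) := by
    rw [← hS, hPdef]
    exact Finset.sum_congr rfl fun j _ => by rw [smul_eq_C_mul, mul_assoc]
  have hne : S.Nonempty := by
    rw [Finset.nonempty_iff_ne_empty]
    rintro rfl
    exact hP (by simpa using hPS)
  have hj0 := S.min'_mem hne
  set j0 := S.min' hne with hj0def
  refine ⟨j0, ?_⟩
  have hcard : S.card ≤ k - j0 := by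
    rw [← Fin.card_Ici]
    exact Finset.card_le_card fun j hj => Finset.mem_Ici.2 (S.min'_le j hj)
  let e : Fin S.card ≃ S := S.equivFin.symm
  have hdv : X ^ (P.rootMultiplicity 0) ∣ P := by
    simpa using pow_rootMultiplicity_dvd P 0
  have hPe : P = ∑ i, b (e i) • (X ^ α (e i) * (1 + X) ^ β (e i) : K[X]) := by
    rw [hPS, ← Finset.sum_coe_sort]
    exact (Equiv.sum_comp e (fun j : S => b j • (X ^ α j * (1 + X) ^ β j : K[X]))).symm
  have hli' := LinearIndependent.comp hli e e.injective
  have := main_indep (fun i => b (e i)) (fun i => α (e i)) (fun i => β (e i)) hli'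
    (e.symm ⟨j0, hj0⟩) (by simpa using hb j0 hj0) (P.rootMultiplicity 0) (hPe ▸ hdv)
  simp only [Equiv.apply_symm_apply] at this
  exact this.trans (Nat.add_le_add_left (Nat.choose_le_choose 2 hcard) _)
end

section
/- Let K be a field of characteristic zero and P = Σ_{j=1}^k a_j X^{α_j}(uX+v)^{β_j} with u,v ≠ 0 and α_1 ≤ ... ≤ α_k. Suppose there exists ℓ with 1 ≤ ℓ < k such that α_{ℓ+1} > max_{1≤j≤ℓ} (α_j + (ℓ+1-j choose 2)). Then P = 0 if and only if both Q = Σ_{j=1}^ℓ a_j X^{α_j}(uX+v)^{β_j} = 0 and R = Σ_{j=ℓ+1}^k a_j X^{α_j}(uX+v)^{β_j} = 0. -/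
open Polynomial

namespace Gap

variable {K : Type*} [Field K]

/-- the derivation `w * d/dX` -/
noncomputable def D (w p : K[X]) : K[X] := w * derivative p

lemma D_sum {ι : Type*} (w : K[X]) (s : Finset ι) (f : ι → K[X]) :
    D w (∑ j ∈ s, f j) = ∑ j ∈ s, D w (f j) := by
  simp [D, Finset.mul_sum]

lemma D_mul (w p q : K[X]) : D w (p * q) = D w p * q + p * D w q := by
  simp only [D, derivative_mul]; ring

lemma D_C_mul (w : K[X]) (c : K) (p : K[X]) : D w (C c * p) = C c * D w p := by
  simp only [D, derivative_C_mul]; ring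

lemma D_iter_sum {ι : Type*} (w : K[X]) (s : Finset ι) (c : ι → K) (f : ι → K[X]) (i : ℕ) :
    (D w)^[i] (∑ j ∈ s, C (c j) * f j) = ∑ j ∈ s, C (c j) * (D w)^[i] (f j) := by
  induction i with
  | zero => simp
  | succ i ih =>
    simp only [Function.iterate_succ_apply', ih, D_sum, D_C_mul]

lemma exists_const [CharZero K] (p q : K[X]) (hq : q ≠ 0)
    (h : derivative p * q - p * derivative q = 0) : ∃ c : K, p = C c * q := by
  classical
  obtain ⟨p', q', hpq, h1, h2⟩ : ∃ p' q' : K[X], IsCoprime p' q' ∧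
      p = EuclideanDomain.gcd p q * p' ∧ q = EuclideanDomain.gcd p q * q' := by
    exact ⟨p / EuclideanDomain.gcd p q, q / EuclideanDomain.gcd p q,
      @isCoprime_div_gcd_div_gcd K[X] _ (EuclideanDomain.gcdMonoid K[X]) p q hq,
      (EuclideanDomain.mul_div_cancel' (fun h0 => hq (EuclideanDomain.gcd_eq_zero_iff.1 h0).2)
        (EuclideanDomain.gcd_dvd_left p q)).symm,
      (EuclideanDomain.mul_div_cancel' (fun h0 => hq (EuclideanDomain.gcd_eq_zero_iff.1 h0).2)
        (EuclideanDomain.gcd_dvd_right p q)).symm⟩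
  set g := EuclideanDomain.gcd p q with hg
  have hg0 : g ≠ 0 := by rintro h0; rw [h0, zero_mul] at h2; exact hq h2
  have hw : wronskian p' q' = 0 := by
    have : g * g * wronskian p' q' = 0 := by
      rw [h1, h2] at h
      simp only [derivative_mul] at h
      simp only [wronskian]
      linear_combination -h
    simpa [hg0] using this
  obtain ⟨e1, e2⟩ := hpq.wronskian_eq_zero_iff.1 hw
  have e1 := eq_C_of_derivative_eq_zero e1
  have e2 := eq_C_of_derivative_eq_zero e2
  have hc : q'.coeff 0 ≠ 0 := by
    intro h0; rw [h0] at e2; apply hq; rw [h2, e2]; simp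
  refine ⟨p'.coeff 0 / q'.coeff 0, ?_⟩
  rw [h1, h2, e1, e2]
  simp only [coeff_C_zero]
  rw [mul_left_comm, ← C_mul, div_mul_cancel₀ _ hc]

lemma wronsk [CharZero K] {ι : Type*} [DecidableEq ι] (w : K[X]) (hw : w ≠ 0) (f : ι → K[X])
    (s : Finset ι) :
    (∀ c : ι → K, ∑ j ∈ s, C (c j) * f j = 0 → ∀ j ∈ s, c j = 0) →
    ∀ q : ι → K[X], (∀ i < s.card, ∑ j ∈ s, (D w)^[i] (f j) * q j = 0) → ∀ j ∈ s, q j = 0 := by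
  induction s using Finset.induction_on with
  | empty => simp
  | insert a s ha ih =>
    intro hli q hq
    rw [Finset.card_insert_of_notMem ha] at hq
    have hli' : ∀ c : ι → K, ∑ j ∈ s, C (c j) * f j = 0 → ∀ j ∈ s, c j = 0 := by
      intro c hc j hj
      have := hli (Function.update c a 0) (by
        rw [Finset.sum_insert ha]
        simp only [Function.update_self, C_0, zero_mul, zero_add]
        rw [← hc]
        refine Finset.sum_congr rfl fun x hx => ?_
        rw [Function.update_of_ne (by rintro rfl; exact ha hx)]) j (Finset.mem_insert_of_mem hj)
      rwa [Function.update_of_ne (by rintro rfl; exact ha hj)] at this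
    by_cases hqa : q a = 0
    · intro j hj
      rcases Finset.mem_insert.1 hj with rfl | hj
      · exact hqa
      · refine ih hli' q (fun i hi => ?_) j hj
        have := hq i (by omega)
        rw [Finset.sum_insert ha, hqa] at this
        simpa using this
    · exfalso
      have key : ∀ j ∈ s, D w (q j) * q a - q j * D w (q a) = 0 := by
        refine ih hli' (fun j => D w (q j) * q a - q j * D w (q a)) (fun i hi => ?_)
        have h0 := hq i (by omega)
        have h1 := hq (i+1) (by omega)
        have h2 : D w (∑ j ∈ insert a s, (D w)^[i] (f j) * q j) = 0 := by
          rw [h0]; simp [D]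
        simp only [D_sum, D_mul, Finset.sum_add_distrib] at h2
        simp only [Function.iterate_succ_apply'] at h1
        rw [h1, zero_add] at h2
        have h3 : ∑ j ∈ insert a s, (D w)^[i] (f j) * (D w (q j) * q a - q j * D w (q a)) = 0 := by
          have : ∑ j ∈ insert a s, (D w)^[i] (f j) * (D w (q j) * q a - q j * D w (q a))
            = (∑ j ∈ insert a s, (D w)^[i] (f j) * D w (q j)) * q a
              - (∑ j ∈ insert a s, (D w)^[i] (f j) * q j) * D w (q a) := by
            rw [Finset.sum_mul, Finset.sum_mul, ← Finset.sum_sub_distrib]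
            exact Finset.sum_congr rfl fun x _ => by ring
          rw [this, h2, h0]; simp
        rw [Finset.sum_insert ha] at h3
        rw [← h3]; ring
      have : ∀ j, ∃ c : K, j ∈ insert a s → q j = C c * q a := by
        intro j
        by_cases hj : j ∈ insert a s
        · rcases Finset.mem_insert.1 hj with rfl | hj
          · exact ⟨1, by simp⟩
          · obtain ⟨c, hc⟩ := exists_const (q j) (q a) hqa (by
              have := key j hj
              have h' : w * (derivative (q j) * q a - q j * derivative (q a)) = 0 := by
                rw [← this]; simp only [D]; ring
              exact (mul_eq_zero.1 h').resolve_left hw)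
            exact ⟨c, fun _ => hc⟩
        · exact ⟨0, fun h => absurd h hj⟩
      choose c hc using this
      have h0 := hq 0 (by omega)
      have h1 : (∑ j ∈ insert a s, C (c j) * f j) * q a = 0 := by
        rw [← h0, Finset.sum_mul]
        refine Finset.sum_congr rfl fun x hx => ?_
        rw [hc x hx]; simp only [Function.iterate_zero, id]; ring
      have h2 := hli c ((mul_eq_zero.1 h1).resolve_right hqa) a (Finset.mem_insert_self _ _)
      apply hqa
      rw [hc a (Finset.mem_insert_self _ _), h2]; simp

lemma D_f (u v : K) (α β : ℕ) :
    D (X * (C u * X + C v)) (X ^ α * (C u * X + C v) ^ β) =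
      (X ^ α * (C u * X + C v) ^ β) *
        (C (α : K) * (C u * X + C v) + C (β : K) * C u * X) := by
  simp only [D]
  rcases α with _ | α <;> rcases β with _ | β <;>
    simp [derivative_mul, derivative_pow] <;> ring

lemma exists_p (u v : K) (α β : ℕ) (i : ℕ) : ∃ p : K[X], p.natDegree ≤ i ∧
    (D (X * (C u * X + C v)))^[i] (X ^ α * (C u * X + C v) ^ β) =
      (X ^ α * (C u * X + C v) ^ β) * p := by
  induction i with
  | zero => exact ⟨1, by simp, by simp⟩
  | succ i ih =>
    obtain ⟨p, hp, h⟩ := ih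
    refine ⟨(C (α : K) * (C u * X + C v) + C (β : K) * C u * X) * p
      + D (X * (C u * X + C v)) p, ?_, ?_⟩
    · refine (natDegree_add_le _ _).trans (max_le ?_ ?_)
      · refine natDegree_mul_le.trans ?_
        have : (C (α : K) * (C u * X + C v) + C (β : K) * C u * X).natDegree ≤ 1 := by
          compute_degree
        omega
      · simp only [D]
        by_cases h0 : p.natDegree = 0
        · rw [derivative_of_natDegree_zero h0]; simp
        · refine natDegree_mul_le.trans ?_
          have : (X * (C u * X + C v) : K[X]).natDegree ≤ 2 := by
            compute_degree
          have := natDegree_derivative_le p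
          omega
    · rw [Function.iterate_succ_apply', h, D_mul, D_f]; ring

lemma dvd_iter (u v : K) (n : ℕ) (P : K[X]) (h : X ^ n ∣ P) (i : ℕ) :
    X ^ n ∣ (D (X * (C u * X + C v)))^[i] P := by
  induction i with
  | zero => simpa
  | succ i ih =>
    rw [Function.iterate_succ_apply']
    obtain ⟨g, hg⟩ := ih
    have := D_f u v n 0
    simp only [pow_zero, mul_one] at this
    rw [hg, D_mul, this]
    exact dvd_add ((Dvd.intro _ rfl).mul_right _) (Dvd.intro _ rfl)

lemma det_deg {m : ℕ} (M : Matrix (Fin m) (Fin m) K[X])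
    (h : ∀ i j, (M i j).natDegree ≤ (i : ℕ)) : M.det.natDegree ≤ m.choose 2 := by
  rw [← Matrix.det_transpose, Matrix.det_apply]
  refine natDegree_sum_le_of_forall_le _ _ fun σ _ => ?_
  refine (natDegree_smul_le _ _).trans ?_
  refine (natDegree_prod_le _ _).trans ?_
  calc _ ≤ ∑ i : Fin m, (i : ℕ) := Finset.sum_le_sum fun i _ => h _ _
    _ = m.choose 2 := by
      rw [Fin.sum_univ_eq_sum_range (fun i => i), Finset.sum_range_id, Nat.choose_two_right]

lemma val_bound [CharZero K] {ι : Type*} [DecidableEq ι] (u v : K) (hu : u ≠ 0) (hv : v ≠ 0)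
    (α β : ι → ℕ) (s : Finset ι)
    (hli : ∀ c : ι → K, ∑ j ∈ s, C (c j) * (X ^ α j * (C u * X + C v) ^ β j) = 0 →
      ∀ j ∈ s, c j = 0)
    (b : ι → K) (n : ℕ)
    (hn : X ^ n ∣ ∑ j ∈ s, C (b j) * (X ^ α j * (C u * X + C v) ^ β j))
    (j : ι) (hj : j ∈ s) (hb : b j ≠ 0) : n ≤ α j + s.card.choose 2 := by
  have hL : (C u * X + C v : K[X]) ≠ 0 := by
    intro h
    have := congrArg (fun p => coeff p 0) h
    simp at this; exact hv this
  set w : K[X] := X * (C u * X + C v) with hw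
  have hw0 : w ≠ 0 := mul_ne_zero X_ne_zero hL
  set f : ι → K[X] := fun j => X ^ α j * (C u * X + C v) ^ β j with hf
  choose p hp1 hp2 using fun (i : ℕ) (j : ι) => exists_p u v (α j) (β j) i
  let e := s.equivFin
  let M : Matrix (Fin s.card) (Fin s.card) K[X] := fun i j => p i (e.symm j)
  let N : Matrix (Fin s.card) (Fin s.card) K[X] := fun i j => (D w)^[i] (f (e.symm j))
  have sum_e : ∀ g : ι → K[X], ∑ x ∈ s, g x = ∑ x : Fin s.card, g (e.symm x) := by
    intro g
    rw [← Finset.sum_coe_sort s g]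
    exact (Equiv.sum_comp e.symm (fun x : s => g x)).symm
  have hN : N.det ≠ 0 := by
    intro h0
    obtain ⟨q, hq0, hq⟩ := Matrix.exists_mulVec_eq_zero_iff.2 h0
    apply hq0
    have := wronsk w hw0 f s hli (fun x => if h : x ∈ s then q (e ⟨x, h⟩) else 0) (by
      intro i hi
      rw [sum_e]
      have := congrFun hq ⟨i, hi⟩
      simp only [Matrix.mulVec, dotProduct, N, Pi.zero_apply] at this
      rw [← this]
      refine Finset.sum_congr rfl fun x _ => ?_
      simp)
    funext x
    have := this (e.symm x) (e.symm x).2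
    simpa using this
  have hM : M.det ≠ 0 := by
    intro h0
    apply hN
    have : N = Matrix.of fun i j => f (e.symm j) * M i j := by
      ext1 i j
      exact hp2 _ _
    rw [this, Matrix.det_mul_row, h0, mul_zero]
  have hMx : ∀ i, X ^ n ∣ (M.mulVec (fun x => C (b (e.symm x)) * f (e.symm x))) i := by
    intro i
    have h1 := dvd_iter u v n _ hn i
    rw [D_iter_sum, sum_e] at h1
    convert h1 using 1
    simp only [Matrix.mulVec, dotProduct]
    refine Finset.sum_congr rfl fun x _ => ?_
    rw [hp2]; simp only [M, hf]; ring
  have h2 : X ^ n ∣ M.det * (C (b j) * f j) := by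
    have h3 : (M.adjugate.mulVec (M.mulVec (fun x => C (b (e.symm x)) * f (e.symm x))))
        (e ⟨j, hj⟩) = M.det * (C (b j) * f j) := by
      rw [Matrix.mulVec_mulVec, Matrix.adjugate_mul, Matrix.smul_mulVec, Matrix.one_mulVec]
      simp
    rw [← h3, Matrix.mulVec, dotProduct]
    exact Finset.dvd_sum fun x _ => (hMx x).mul_left _
  have hcop : IsCoprime (X ^ n : K[X]) (C (b j) * (C u * X + C v) ^ β j) := by
    apply IsCoprime.mul_right
    · exact ⟨0, C (b j)⁻¹, by rw [← C_mul, inv_mul_cancel₀ hb]; simp⟩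
    · apply IsCoprime.pow
      exact ⟨-C (u / v), C (1 / v), by
        rw [mul_add, ← mul_assoc, ← C_mul, ← C_mul, one_div_mul_cancel hv]
        have : 1 / v * u = u / v := by ring
        rw [this]; simp⟩
  have h3 : X ^ n ∣ M.det * X ^ α j := by
    apply hcop.dvd_of_dvd_mul_right
    convert h2 using 1
    simp only [hf]; ring
  have h4 := natDegree_le_of_dvd h3 (mul_ne_zero hM (pow_ne_zero _ X_ne_zero))
  rw [natDegree_X_pow] at h4
  have h5 := det_deg M (fun i j => hp1 _ _)
  have h6 := natDegree_mul_le (p := M.det) (q := X ^ α j)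
  rw [natDegree_X_pow] at h6
  omega

lemma exists_indep {ι : Type*} [DecidableEq ι] (f : ι → K[X]) (Q : K[X]) (s : Finset ι) :
    ∀ b : ι → K, ∑ j ∈ s, C (b j) * f j = Q → ∃ t ⊆ s, ∃ b' : ι → K,
      ∑ j ∈ t, C (b' j) * f j = Q ∧ (∀ j ∈ t, b' j ≠ 0) ∧
      (∀ c : ι → K, ∑ j ∈ t, C (c j) * f j = 0 → ∀ j ∈ t, c j = 0) := by
  induction s using Finset.strongInduction with
  | H s ih =>
    intro b hb
    have step : ∀ b : ι → K, ∑ j ∈ s, C (b j) * f j = Q → ∀ j ∈ s, b j = 0 →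
      ∃ t ⊆ s, ∃ b' : ι → K,
      ∑ j ∈ t, C (b' j) * f j = Q ∧ (∀ j ∈ t, b' j ≠ 0) ∧
      (∀ c : ι → K, ∑ j ∈ t, C (c j) * f j = 0 → ∀ j ∈ t, c j = 0) := by
      intro b hb j hj hbj
      obtain ⟨t, ht, h⟩ := ih (s.erase j) (Finset.erase_ssubset hj) b (by
        rw [← Finset.add_sum_erase s _ hj, hbj] at hb
        simpa using hb)
      exact ⟨t, ht.trans (Finset.erase_subset _ _), h⟩
    by_cases h1 : ∃ j ∈ s, b j = 0
    · obtain ⟨j, hj, h⟩ := h1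
      exact step b hb j hj h
    by_cases h2 : ∃ c : ι → K, ∑ j ∈ s, C (c j) * f j = 0 ∧ ∃ j ∈ s, c j ≠ 0
    · obtain ⟨c, hc, j, hj, hcj⟩ := h2
      refine step (fun x => b x - b j / c j * c x) ?_ j hj ?_
      · have : ∑ x ∈ s, C (b x - b j / c j * c x) * f x
          = ∑ x ∈ s, C (b x) * f x - C (b j / c j) * ∑ x ∈ s, C (c x) * f x := by
          rw [Finset.mul_sum, ← Finset.sum_sub_distrib]
          refine Finset.sum_congr rfl fun x _ => ?_
          rw [C_sub, C_mul]; ring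
        rw [this, hb, hc]; simp
      · simp [div_mul_cancel₀ _ hcj]
    · push Not at h1 h2
      exact ⟨s, subset_rfl, b, hb, h1, h2⟩

end Gap

theorem stmt6 {K : Type*} [Field K] [CharZero K] (k ℓ : ℕ)
    (hℓ1 : 1 ≤ ℓ) (hℓk : ℓ < k)
    (a : Fin k → K) (α β : Fin k → ℕ) (hα : Monotone α)
    (u v : K) (hu : u ≠ 0) (hv : v ≠ 0)
    (hgap : ∀ j : Fin k, (j : ℕ) < ℓ →
      α j + (ℓ - (j : ℕ)).choose 2 < α ⟨ℓ, hℓk⟩) :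
    (∑ j, C (a j) * X ^ (α j) * (C u * X + C v) ^ (β j)) = 0 ↔
      ((∑ j ∈ Finset.univ.filter (fun j : Fin k => (j : ℕ) < ℓ),
          C (a j) * X ^ (α j) * (C u * X + C v) ^ (β j)) = 0 ∧
       (∑ j ∈ Finset.univ.filter (fun j : Fin k => ℓ ≤ (j : ℕ)),
          C (a j) * X ^ (α j) * (C u * X + C v) ^ (β j)) = 0) := by
  have hsplit := Finset.sum_filter_add_sum_filter_not Finset.univ
    (fun j : Fin k => (j : ℕ) < ℓ)
    (fun j => C (a j) * X ^ (α j) * (C u * X + C v) ^ (β j))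
  simp only [not_lt] at hsplit
  rw [← hsplit]
  constructor
  swap
  · rintro ⟨h1, h2⟩; rw [h1, h2, add_zero]
  intro h
  have hR : X ^ α ⟨ℓ, hℓk⟩ ∣ ∑ j ∈ Finset.univ.filter (fun j : Fin k => ℓ ≤ (j : ℕ)),
          C (a j) * X ^ (α j) * (C u * X + C v) ^ (β j) := by
    refine Finset.dvd_sum fun j hj => ?_
    have hj : ℓ ≤ (j : ℕ) := by simpa using hj
    exact ((pow_dvd_pow X (hα (show (⟨ℓ, hℓk⟩ : Fin k) ≤ j from hj))).mul_left _).mul_right _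
  have hQ0 : (∑ j ∈ Finset.univ.filter (fun j : Fin k => (j : ℕ) < ℓ),
          C (a j) * X ^ (α j) * (C u * X + C v) ^ (β j)) = 0 := by
    by_contra hne
    have hQ : X ^ α ⟨ℓ, hℓk⟩ ∣ ∑ j ∈ Finset.univ.filter (fun j : Fin k => (j : ℕ) < ℓ),
          C (a j) * X ^ (α j) * (C u * X + C v) ^ (β j) := by
      rw [eq_neg_of_add_eq_zero_left h]; exact hR.neg_right
    obtain ⟨t, ht, b, hb, hb0, hli⟩ := Gap.exists_indep
      (fun j => X ^ (α j) * (C u * X + C v) ^ (β j)) _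
      (Finset.univ.filter (fun j : Fin k => (j : ℕ) < ℓ)) a
      (Finset.sum_congr rfl fun j _ => (mul_assoc _ _ _).symm)
    have htne : t.Nonempty := by
      rw [Finset.nonempty_iff_ne_empty]
      rintro rfl
      exact hne (by rw [← hb]; simp)
    rw [← hb] at hQ
    have hm := t.min'_mem htne
    have h1 := Gap.val_bound u v hu hv α β t hli b _ hQ (t.min' htne) hm (hb0 _ hm)
    have hlt : ∀ x ∈ t, (x : ℕ) < ℓ := fun x hx => by simpa using ht hx
    have hcard : t.card ≤ ℓ - (t.min' htne : ℕ) := by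
      rw [← Nat.card_Ico, ← Finset.card_map Fin.valEmbedding]
      refine Finset.card_le_card fun x hx => ?_
      obtain ⟨y, hy, rfl⟩ := Finset.mem_map.1 hx
      exact Finset.mem_Ico.2 ⟨t.min'_le y hy, hlt y hy⟩
    have h2 := hgap _ (hlt _ hm)
    have h3 := Nat.choose_le_choose 2 hcard
    omega
  exact ⟨hQ0, by rwa [hQ0, zero_add] at h⟩
end

section
/- Let K be a field of characteristic zero, f_1,...,f_m ∈ K[X] with deg f_i = d_i, and P = Σ_{j=1}^k a_j Π_{i=1}^m f_i^{α_{ij}}, where α_{ij} are nonnegative integers. Let ξ ∈ K and let μ_i be the multiplicity of ξ as a root of f_i. If P ≠ 0, then the multiplicity of ξ as a root of P is at most max_{1≤j≤k} Σ_{i=1}^m (μ_i α_{ij} + (d_i − μ_i)·(k+1−j choose 2)). -/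
open Polynomial

/-- Columnwise divisibility passes to the determinant. -/
theorem aux_dvd_det {R : Type*} [CommRing R] {n : ℕ} (M : Matrix (Fin n) (Fin n) R) (d : Fin n → R)
    (h : ∀ l j, d j ∣ M l j) : ∏ j, d j ∣ M.det := by
  choose q hq using h
  have : M = Matrix.of (fun l j => d j * (Matrix.of q) l j) := by
    ext l j; simp [hq l j]
  rw [this, Matrix.det_mul_row]
  exact Dvd.intro _ rfl

theorem aux_deg_det {K : Type*} [Field K] {n : ℕ} (M : Matrix (Fin n) (Fin n) K[X]) (e : Fin n → ℕ)
    (h : ∀ l j, (M l j).natDegree ≤ e j) : M.det.natDegree ≤ ∑ j, e j := by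
  rw [Matrix.det_apply]
  refine natDegree_sum_le_of_forall_le _ _ fun σ _ => ?_
  refine (natDegree_smul_le _ _).trans ?_
  refine (natDegree_prod_le _ _).trans ?_
  exact Finset.sum_le_sum fun j _ => h _ _

/-- Wronskian matrix. -/
noncomputable def wmat {K : Type*} [Field K] {n : ℕ} (g : Fin n → K[X]) :
    Matrix (Fin n) (Fin n) K[X] := Matrix.of fun l j => derivative^[(l : ℕ)] (g j)

theorem aux_scale {K : Type*} [Field K] {n : ℕ} (g : Fin n → K[X]) (u : K[X]) :
    (Matrix.of fun l j : Fin n => u ^ (l : ℕ) * wmat g l j).det = u ^ (n.choose 2) * (wmat g).det := by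
  rw [Matrix.det_mul_column, Finset.prod_pow_eq_pow_sum, Fin.sum_univ_eq_sum_range (fun i => i) n,
    Finset.sum_range_id, Nat.choose_two_right]

theorem aux_dvd_iter {K : Type*} [Field K] (F g : K[X]) (hg : g ∣ F * derivative g) (p : K[X])
    (hp : g ∣ p) (l : ℕ) : g ∣ F ^ l * derivative^[l] p := by
  have step : ∀ p, g ∣ p → g ∣ F * derivative p := by
    rintro _ ⟨q, rfl⟩
    rw [derivative_mul, mul_add]
    refine dvd_add ?_ ?_
    · rw [← mul_assoc]; exact hg.mul_right _
    · exact ⟨F * derivative q, by ring⟩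
  induction l with
  | zero => simpa using hp
  | succ l ih =>
    have h1 := step _ ih
    have : F ^ (l + 1) * derivative^[l + 1] p = F * derivative (F ^ l * derivative^[l] p)
        - C (l : K) * derivative F * (F ^ l * derivative^[l] p) := by
      rw [derivative_mul, Function.iterate_succ_apply', derivative_pow]
      cases l with
      | zero => simp
      | succ l => simp only [Nat.add_sub_cancel]; ring
    rw [this]
    exact dvd_sub h1 (ih.mul_left _)

theorem aux_const {K : Type*} [Field K] [CharZero K] (a b : K[X]) (hb : b ≠ 0)
    (h : b * derivative a = derivative b * a) : ∃ c : K, a = C c * b := by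
  classical
  set d := b.natDegree
  let c := a.coeff d / b.leadingCoeff
  refine ⟨c, ?_⟩
  by_contra hne
  set p := a - C c * b with hp
  have hp0 : p ≠ 0 := sub_ne_zero.mpr hne
  have hlc : b.leadingCoeff ≠ 0 := leadingCoeff_ne_zero.mpr hb
  have hpd : p.coeff d = 0 := by
    have : b.coeff d = b.leadingCoeff := rfl
    simp only [hp, coeff_sub, coeff_C_mul, this, c]
    field_simp
    simp
  have hdeg : p.natDegree ≠ d := by
    intro h
    rw [← h] at hpd
    exact hp0 (leadingCoeff_eq_zero.mp hpd)
  have h2 : b * (X * derivative p) = (X * derivative b) * p := by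
    simp only [hp, derivative_sub, derivative_mul, derivative_C]
    linear_combination X * h
  have hX : ∀ q : K[X], (X * derivative q).natDegree ≤ q.natDegree ∧
      (X * derivative q).coeff q.natDegree = q.natDegree * q.leadingCoeff := by
    intro q
    have hc : ∀ i, (X * derivative q).coeff i = i * q.coeff i := by
      intro i
      cases i with
      | zero => simp
      | succ i => rw [coeff_X_mul, coeff_derivative]; push_cast; ring
    refine ⟨?_, hc _⟩
    rw [natDegree_le_iff_coeff_eq_zero]
    intro N hN
    rw [hc, coeff_eq_zero_of_natDegree_lt hN, mul_zero]
  have h3 := congrArg (fun q => q.coeff (b.natDegree + p.natDegree)) h2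
  rw [coeff_mul_add_eq_of_natDegree_le le_rfl (hX p).1, coeff_mul_add_eq_of_natDegree_le (hX b).1 le_rfl,
    (hX p).2, (hX b).2] at h3
  have hlp : p.leadingCoeff ≠ 0 := leadingCoeff_ne_zero.mpr hp0
  have h4 : ((p.natDegree : K) - d) * (b.leadingCoeff * p.leadingCoeff) = 0 := by
    simp only [coeff_natDegree] at h3
    linear_combination h3
  rcases mul_eq_zero.mp h4 with h5 | h5
  · exact hdeg (by exact_mod_cast sub_eq_zero.mp h5)
  · exact (mul_ne_zero hlc hlp) h5

theorem aux_wronsk {K : Type*} [Field K] [CharZero K] {n : ℕ} (g : Fin n → K[X])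
    (hg : LinearIndependent K g) : (wmat g).det ≠ 0 := by
  induction n with
  | zero => simp
  | succ n ih =>
    have hg' : LinearIndependent K (fun i : Fin n => g i.succ) :=
      hg.comp _ (Fin.succ_injective n)
    have hW := ih _ hg'
    have hker : ∀ v : Fin n → K[X],
        (∀ l : Fin n, ∑ j, v j * derivative^[(l : ℕ)] (g j.succ) = 0) → v = 0 := by
      intro v hv
      by_contra hv0
      refine hW (Matrix.exists_mulVec_eq_zero_iff.mp ⟨v, hv0, ?_⟩)
      ext1 l
      simp only [Matrix.mulVec, dotProduct, wmat, Matrix.of_apply, Pi.zero_apply]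
      rw [← hv l]
      exact Finset.sum_congr rfl fun j _ => mul_comm _ _
    intro hdet
    obtain ⟨c, hc0, hc⟩ := Matrix.exists_mulVec_eq_zero_iff.mpr hdet
    have hc' : ∀ l : ℕ, l < n + 1 → ∑ j, c j * derivative^[l] (g j) = 0 := by
      intro l hl
      have := congrFun hc ⟨l, hl⟩
      simp only [Matrix.mulVec, dotProduct, wmat, Matrix.of_apply, Pi.zero_apply] at this
      rw [← this]
      exact Finset.sum_congr rfl fun j _ => mul_comm _ _
    have hd : ∀ l : ℕ, l < n → ∑ j, derivative (c j) * derivative^[l] (g j) = 0 := by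
      intro l hl
      have h1 := congrArg derivative (hc' l (by omega))
      have h2 := hc' (l + 1) (by omega)
      simp only [derivative_sum, derivative_mul, derivative_zero, Finset.sum_add_distrib,
        ← Function.iterate_succ_apply' derivative] at h1
      rwa [h2, add_zero] at h1
    have hcz : c 0 ≠ 0 := by
      intro h0
      have := hker (fun j => c j.succ) (fun l => by
        have := hc' l (by omega)
        rwa [Fin.sum_univ_succ, h0, zero_mul, zero_add] at this)
      refine hc0 ?_
      ext1 j
      refine Fin.cases h0 (fun j => congrFun this j) j
    have hprop := hker (fun j => c 0 * derivative (c j.succ) - derivative (c 0) * c j.succ)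
      (fun l => by
        have e1 := hc' l (by omega)
        have e2 := hd l l.2
        rw [Fin.sum_univ_succ] at e1 e2
        simp only [sub_mul, Finset.sum_sub_distrib, mul_assoc, ← Finset.mul_sum]
        linear_combination c 0 * e2 - derivative (c 0) * e1)
    have hall : ∀ j, ∃ b : K, c j = C b * c 0 := by
      intro j
      refine Fin.cases ⟨1, by simp⟩ (fun j => ?_) j
      exact aux_const _ _ hcz (sub_eq_zero.mp (congrFun hprop j))
    choose b hb using hall
    have e := hc' 0 (by omega)
    simp only [Function.iterate_zero, id] at e
    have e' : c 0 * ∑ j, b j • g j = 0 := by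
      rw [← e, Finset.mul_sum]
      refine Finset.sum_congr rfl fun j _ => ?_
      rw [hb j, smul_eq_C_mul]
      conv_rhs => rw [mul_right_comm]
      ring
    have hbz := Fintype.linearIndependent_iff.mp hg b ((mul_eq_zero.mp e').resolve_left hcz) 0
    have := hb 0
    rw [hbz] at this
    exact hcz (by simpa using this)

theorem aux_core {K : Type*} [Field K] [CharZero K] {n : ℕ} (F : K[X]) (hF : F ≠ 0)
    (h : Fin n → K[X]) (hli : LinearIndependent K h)
    (hd : ∀ j, h j ∣ F * derivative (h j)) (c : Fin n → K) (P : K[X]) (hP : P ≠ 0)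
    (hPc : P = ∑ j, c j • h j) (j₀ : Fin n) (hc : c j₀ ≠ 0) (ξ : K) :
    P.rootMultiplicity ξ + n.choose 2 * F.rootMultiplicity ξ ≤
      (h j₀).rootMultiplicity ξ + n.choose 2 * F.natDegree := by
  classical
  have hne : ∀ j, h j ≠ 0 := fun j => hli.ne_zero j
  set W := (wmat h).det with hWdef
  have hW : W ≠ 0 := aux_wronsk h hli
  set N := n.choose 2
  have hXdeg : W.natDegree + N ≤ ∑ j, (h j).natDegree := by
    have h1 := aux_deg_det (Matrix.of fun l j : Fin n => (X : K[X]) ^ (l : ℕ) * wmat h l j)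
      (fun j => (h j).natDegree) (fun l j => by
        simp only [Matrix.of_apply, wmat]
        by_cases hl : (l : ℕ) ≤ (h j).natDegree
        · refine natDegree_mul_le.trans ?_
          have := natDegree_iterate_derivative (h j) l
          rw [natDegree_X_pow]
          omega
        · rw [iterate_derivative_eq_zero (by omega)]
          simp)
    rw [aux_scale, natDegree_mul (pow_ne_zero _ X_ne_zero) hW, natDegree_X_pow] at h1
    omega
  obtain ⟨Q, hQ⟩ : ∏ j, h j ∣ F ^ N * W := by
    rw [← aux_scale]
    exact aux_dvd_det _ _ fun l j => by
      simpa [wmat] using aux_dvd_iter F (h j) (hd j) (h j) dvd_rfl l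
  have hFW : F ^ N * W ≠ 0 := mul_ne_zero (pow_ne_zero _ hF) hW
  have hQ0 : Q ≠ 0 := by
    rintro rfl
    exact hFW (by rw [hQ, mul_zero])
  have hprod : ∏ j, h j ≠ 0 := Finset.prod_ne_zero_iff.mpr fun j _ => hne j
  have hdegQ := congrArg natDegree hQ
  rw [natDegree_mul (pow_ne_zero _ hF) hW, natDegree_pow, natDegree_mul hprod hQ0,
    natDegree_prod _ _ fun j _ => hne j] at hdegQ
  have hrm_prod : ∀ q : Fin n → K[X], (∀ j, q j ≠ 0) →
      (∏ j, q j).rootMultiplicity ξ = ∑ j, (q j).rootMultiplicity ξ := by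
    intro q hq
    simp only [← count_roots]
    rw [roots_prod _ _ (Finset.prod_ne_zero_iff.mpr fun j _ => hq j), Multiset.count_bind]
    rfl
  have hordQ := congrArg (rootMultiplicity ξ) hQ
  have hpow : (F ^ N).rootMultiplicity ξ = N * F.rootMultiplicity ξ := by
    simp [← count_roots]
  rw [rootMultiplicity_mul hFW, rootMultiplicity_mul (mul_ne_zero hprod hQ0),
    hrm_prod h hne, hpow] at hordQ
  have hQle : Q.rootMultiplicity ξ ≤ Q.natDegree := by
    rw [← count_roots]
    exact (Multiset.count_le_card _ _).trans (card_roots' Q)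
  set h' := Function.update h j₀ P with hh'
  have hW' : (wmat h').det = C (c j₀) * W := by
    have : wmat h' = (wmat h).updateCol j₀ (fun l => ∑ j, C (c j) • wmat h l j) := by
      ext1 l j
      by_cases hj : j = j₀
      · subst hj
        simp [wmat, hh', hPc, iterate_derivative_sum, iterate_derivative_smul, smul_eq_C_mul]
      · simp [wmat, hh', hj]
    rw [this, Matrix.det_updateCol_sum, smul_eq_mul]
  have hne' : ∀ j, h' j ≠ 0 := by
    intro j
    by_cases hj : j = j₀
    · subst hj; simpa [hh'] using hP
    · simpa [hh', hj] using hne j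
  have hdvd : ∏ j, (X - C ξ) ^ (h' j).rootMultiplicity ξ ∣ (X - C ξ) ^ N * (wmat h').det := by
    rw [← aux_scale]
    refine aux_dvd_det _ _ fun l j => ?_
    have := aux_dvd_iter (X - C ξ) ((X - C ξ) ^ (h' j).rootMultiplicity ξ) (by
      generalize (h' j).rootMultiplicity ξ = e
      cases e with
      | zero => simp
      | succ e =>
        refine ⟨C ((e + 1 : ℕ) : K), ?_⟩
        rw [derivative_pow]
        simp
        ring) (h' j) (pow_rootMultiplicity_dvd _ _) l
    simpa [wmat] using this
  have hcW : C (c j₀) * W ≠ 0 := mul_ne_zero (C_ne_zero.mpr hc) hW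
  have hXξ : (X - C ξ) ^ N ≠ 0 := pow_ne_zero _ (X_sub_C_ne_zero ξ)
  rw [Finset.prod_pow_eq_pow_sum, hW', ← le_rootMultiplicity_iff (mul_ne_zero hXξ hcW),
    rootMultiplicity_mul (mul_ne_zero hXξ hcW), rootMultiplicity_X_sub_C_pow,
    rootMultiplicity_mul hcW, rootMultiplicity_C, zero_add] at hdvd
  have hs1 : ∑ j, (h' j).rootMultiplicity ξ = P.rootMultiplicity ξ +
      ∑ j ∈ Finset.univ.erase j₀, (h j).rootMultiplicity ξ := by
    rw [← Finset.add_sum_erase _ _ (Finset.mem_univ j₀)]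
    congr 1
    · simp [hh']
    · refine Finset.sum_congr rfl fun j hj => ?_
      simp [hh', Finset.ne_of_mem_erase hj]
  have hs2 := Finset.add_sum_erase Finset.univ (fun j => (h j).rootMultiplicity ξ)
    (Finset.mem_univ j₀)
  omega

theorem aux_main {K : Type*} [Field K] [CharZero K] (F : K[X]) (hF : F ≠ 0) (ξ : K)
    (P : K[X]) (hP : P ≠ 0) (k : ℕ) (g : Fin k → K[X])
    (hd : ∀ j, g j ∣ F * derivative (g j)) (hPg : P ∈ Submodule.span K (Set.range g)) :
    ∃ j : Fin k, P.rootMultiplicity ξ ≤ (g j).rootMultiplicity ξ +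
      (F.natDegree - F.rootMultiplicity ξ) * (k - (j : ℕ)).choose 2 := by
  classical
  induction k with
  | zero => simp at hPg; exact absurd hPg hP
  | succ k ih =>
    by_cases hT : P ∈ Submodule.span K (Set.range fun j : Fin k => g j.succ)
    · obtain ⟨j, hj⟩ := ih _ (fun j => hd j.succ) hT
      exact ⟨j.succ, by simpa using hj⟩
    refine ⟨0, ?_⟩
    obtain ⟨b, hbs, hspan, hbli⟩ :=
      exists_linearIndependent K (Set.range fun j : Fin k => g j.succ)
    have hbfin : b.Finite := (Set.finite_range _).subset hbs
    haveI : Fintype b := hbfin.fintype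
    have hcard : Fintype.card b ≤ k := by
      rw [← Set.toFinset_card]
      calc b.toFinset.card ≤ (Finset.univ.image fun j : Fin k => g j.succ).card := by
            refine Finset.card_le_card fun x hx => ?_
            simpa using hbs (by simpa using hx)
        _ ≤ k := Finset.card_image_le.trans (by simp)
    let e := (Fintype.equivFin b).symm
    let t : Fin (Fintype.card b) → K[X] := fun i => (e i : K[X])
    have htr : Set.range t = b := by
      have : t = Subtype.val ∘ e := rfl
      rw [this, e.surjective.range_comp, Subtype.range_coe]
    have htspan : Submodule.span K (Set.range t) =
        Submodule.span K (Set.range fun j : Fin k => g j.succ) := by rw [htr, hspan]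
    have hrg : Set.range g = insert (g 0) (Set.range fun j : Fin k => g j.succ) := by
      ext x
      simp [Fin.exists_fin_succ, eq_comm]
    rw [hrg, Submodule.mem_span_insert] at hPg
    obtain ⟨c0, z, hz, hPz⟩ := hPg
    have hg0 : g 0 ∉ Submodule.span K (Set.range t) := by
      rw [htspan]
      intro h0
      exact hT (hPz ▸ Submodule.add_mem _ (Submodule.smul_mem _ _ h0) hz)
    have hc0 : c0 ≠ 0 := by
      rintro rfl
      exact hT (by rw [hPz]; simpa using hz)
    rw [← htspan, Submodule.mem_span_range_iff_exists_fun] at hz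
    obtain ⟨c, hc⟩ := hz
    have hli : LinearIndependent K (Fin.cons (g 0) t : Fin (Fintype.card b + 1) → K[X]) := by
      rw [linearIndependent_finCons]
      exact ⟨hbli.comp _ e.injective, hg0⟩
    have hcore := aux_core F hF (Fin.cons (g 0) t : Fin (Fintype.card b + 1) → K[X]) hli
      (fun j => by
        refine Fin.cases (by simpa using hd 0) (fun j => ?_) j
        obtain ⟨i, hi⟩ := hbs (e j).2
        have := hd i.succ
        simp only at hi
        rw [hi] at this
        simpa using this)
      (Fin.cons c0 c : Fin (Fintype.card b + 1) → K) P hP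
      (by rw [Fin.sum_univ_succ]; simp [hPz, hc]) 0 (by simpa using hc0) ξ
    simp only [Fin.cons_zero] at hcore
    have hle : F.rootMultiplicity ξ ≤ F.natDegree := by
      rw [← count_roots]
      exact (Multiset.count_le_card _ _).trans (card_roots' F)
    have hch : (Fintype.card b + 1).choose 2 ≤ (k + 1).choose 2 :=
      Nat.choose_le_choose 2 (by omega)
    obtain ⟨r, hr⟩ := Nat.exists_eq_add_of_le hle
    have h1 := Nat.mul_le_mul_left r hch
    simp only [Fin.val_zero, Nat.sub_zero]
    rw [hr] at hcore ⊢
    rw [Nat.add_sub_cancel_left]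
    rw [mul_add, mul_comm _ r] at hcore
    omega

theorem aux_prod_dvd {K : Type*} [Field K] {ι : Type*} (s : Finset ι) (f : ι → K[X]) (α : ι → ℕ) :
    ∏ i ∈ s, f i ^ α i ∣ (∏ i ∈ s, f i) * derivative (∏ i ∈ s, f i ^ α i) := by
  classical
  induction s using Finset.induction_on with
  | empty => simp
  | insert a s ha ih =>
    rw [Finset.prod_insert ha, Finset.prod_insert ha, derivative_mul]
    have h1 : f a ^ α a ∣ f a * derivative (f a ^ α a) := by
      cases α a with
      | zero => simp
      | succ e =>
        rw [derivative_pow, Nat.add_sub_cancel]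
        exact ⟨C ((e + 1 : ℕ) : K) * derivative (f a), by ring⟩
    obtain ⟨u, hu⟩ := h1
    obtain ⟨v, hv⟩ := ih
    refine ⟨(∏ i ∈ s, f i) * u + f a * v, ?_⟩
    linear_combination (∏ i ∈ s, f i) * (∏ i ∈ s, f i ^ α i) * hu + f a * f a ^ α a * hv

theorem stmt12 {K : Type*} [Field K] [CharZero K] (m k : ℕ)
    (f : Fin m → K[X]) (hf : ∀ i, f i ≠ 0)
    (a : Fin k → K) (α : Fin m → Fin k → ℕ) (ξ : K)
    (P : K[X]) (hPdef : P = ∑ j, C (a j) * ∏ i, (f i) ^ (α i j))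
    (hP : P ≠ 0) :
    ∃ j : Fin k, P.rootMultiplicity ξ ≤
      ∑ i, ((f i).rootMultiplicity ξ * α i j
        + ((f i).natDegree - (f i).rootMultiplicity ξ) * (k - (j : ℕ)).choose 2) := by
  classical
  have hrm_prod : ∀ q : Fin m → K[X], (∀ j, q j ≠ 0) →
      (∏ j, q j).rootMultiplicity ξ = ∑ j, (q j).rootMultiplicity ξ := by
    intro q hq
    simp only [← count_roots]
    rw [roots_prod _ _ (Finset.prod_ne_zero_iff.mpr fun j _ => hq j), Multiset.count_bind]
    rfl
  have hle : ∀ i, (f i).rootMultiplicity ξ ≤ (f i).natDegree := by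
    intro i
    rw [← count_roots]
    exact (Multiset.count_le_card _ _).trans (card_roots' (f i))
  obtain ⟨j, hj⟩ := aux_main (∏ i, f i) (Finset.prod_ne_zero_iff.mpr fun j _ => hf j) ξ P hP k
    (fun j => ∏ i, f i ^ α i j) (fun j => aux_prod_dvd _ _ _) (by
      rw [Submodule.mem_span_range_iff_exists_fun]
      exact ⟨a, by simp [hPdef, smul_eq_C_mul]⟩)
  refine ⟨j, hj.trans (le_of_eq ?_)⟩
  rw [hrm_prod _ fun i => pow_ne_zero _ (hf i), hrm_prod _ hf, natDegree_prod _ _ fun i _ => hf i,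
    Finset.sum_add_distrib, ← Finset.sum_mul, Finset.sum_tsub_distrib _ fun i _ => hle i]
  congr 1
  refine Finset.sum_congr rfl fun i _ => ?_
  simp [← count_roots, mul_comm]
end
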